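/- arXiv:2210.16658 — 2 statements merged into one kernel-verified Lean document; each statement's English description precedes it below -/
import Mathlib

section
/- Let λ_W > 0, λ_H ≥ 0 and let H₀ ∈ ℝ^{d×Kn} satisfy Σ_W(H₀) ≠ 0 and Σ_B(H₀) ≠ 0. For each β > 0 let H_{1/β} be a global minimizer of the map H ↦ L(H) + (β/(2Kn))‖H − H₀‖_F². Then there exists a constant C = C(H₀) > 0 such that for all β > C one has tr(Σ_B(H_{1/β})) > 0 and ÑC₁(H_{1/β}) < ÑC₁(H₀). -/
open Matrix Filter
open scoped BigOperators

noncomputable section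

variable {K n d : ℕ}

/-- The one-hot label matrix `Y = I_K ⊗ 1_nᵀ`: columns are indexed by class/sample pairs. -/
def Ymat (K n : ℕ) : Matrix (Fin K) (Fin K × Fin n) ℝ :=
  Matrix.of fun k p => if p.1 = k then 1 else 0

/-- Squared Frobenius norm. -/
def frobSq {m p : Type*} [Fintype m] [Fintype p] (M : Matrix m p ℝ) : ℝ :=
  ∑ i, ∑ j, (M i j) ^ 2

/-- Frobenius norm. -/
def frobNorm {m p : Type*} [Fintype m] [Fintype p] (M : Matrix m p ℝ) : ℝ :=
  Real.sqrt (frobSq M)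

/-- The unconstrained-features objective `g`. -/
def g (lW lH : ℝ) (W : Matrix (Fin K) (Fin d) ℝ)
    (H : Matrix (Fin d) (Fin K × Fin n) ℝ) : ℝ :=
  (1 / (2 * (K : ℝ) * n)) * frobSq (W * H - Ymat K n) +
    (lW / (2 * (K : ℝ))) * frobSq W + (lH / (2 * (K : ℝ) * n)) * frobSq H

/-- Class means. -/
def classMean (H : Matrix (Fin d) (Fin K × Fin n) ℝ) (k : Fin K) : Fin d → ℝ :=
  fun a => (1 / (n : ℝ)) * ∑ i, H a (k, i)

/-- Global mean. -/
def globalMean (H : Matrix (Fin d) (Fin K × Fin n) ℝ) : Fin d → ℝ :=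
  fun a => (1 / ((K : ℝ) * n)) * ∑ p, H a p

/-- Matrix of class means `H̄ ∈ ℝ^{d×K}`. -/
def Hbar (H : Matrix (Fin d) (Fin K × Fin n) ℝ) : Matrix (Fin d) (Fin K) ℝ :=
  Matrix.of fun a k => classMean H k a

/-- `H̄ ⊗ 1_nᵀ`: the matrix whose n columns of class k all equal the class mean. -/
def HbarSpread (H : Matrix (Fin d) (Fin K × Fin n) ℝ) :
    Matrix (Fin d) (Fin K × Fin n) ℝ :=
  Matrix.of fun a p => classMean H p.1 a

/-- Within-class covariance. -/
def SigmaW (H : Matrix (Fin d) (Fin K × Fin n) ℝ) : Matrix (Fin d) (Fin d) ℝ :=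
  Matrix.of fun a b =>
    (1 / ((K : ℝ) * n)) * ∑ p : Fin K × Fin n,
      (H a p - classMean H p.1 a) * (H b p - classMean H p.1 b)

/-- Between-class covariance. -/
def SigmaB (H : Matrix (Fin d) (Fin K × Fin n) ℝ) : Matrix (Fin d) (Fin d) ℝ :=
  Matrix.of fun a b =>
    (1 / (K : ℝ)) * ∑ k : Fin K,
      (classMean H k a - globalMean H a) * (classMean H k b - globalMean H b)

/-- Non-centered total covariance. -/
def SigmaTtil (H : Matrix (Fin d) (Fin K × Fin n) ℝ) : Matrix (Fin d) (Fin d) ℝ :=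
  (1 / ((K : ℝ) * n)) • (H * Hᵀ)

/-- Non-centered between-class covariance. -/
def SigmaBtil (H : Matrix (Fin d) (Fin K × Fin n) ℝ) : Matrix (Fin d) (Fin d) ℝ :=
  Matrix.of fun a b => (1 / (K : ℝ)) * ∑ k : Fin K, classMean H k a * classMean H k b

/-- The closed-form optimal last-layer weights `W*(H)`. -/
def Wstar (lW : ℝ) (H : Matrix (Fin d) (Fin K × Fin n) ℝ) :
    Matrix (Fin K) (Fin d) ℝ :=
  Ymat K n * Hᵀ * (H * Hᵀ + ((n : ℝ) * lW) • (1 : Matrix (Fin d) (Fin d) ℝ))⁻¹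

/-- The central-path loss `L(H)`. -/
def Lcp (lW lH : ℝ) (H : Matrix (Fin d) (Fin K × Fin n) ℝ) : ℝ :=
  (1 / (2 * (K : ℝ) * n)) * frobSq (Wstar lW H * H - Ymat K n) +
    (lW / (2 * (K : ℝ))) * frobSq (Wstar lW H) +
    (lH / (2 * (K : ℝ) * n)) * frobSq H

/-- `A(H) = Σ̃_T(H) + (λ_W/K) I`. -/
def Amat (lW : ℝ) (H : Matrix (Fin d) (Fin K × Fin n) ℝ) : Matrix (Fin d) (Fin d) ℝ :=
  SigmaTtil H + (lW / (K : ℝ)) • 1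

/-- The gradient of the central-path loss w.r.t. the Frobenius inner product. -/
def gradL (lW lH : ℝ) (H : Matrix (Fin d) (Fin K × Fin n) ℝ) :
    Matrix (Fin d) (Fin K × Fin n) ℝ :=
  (1 / ((K : ℝ) ^ 2 * n)) •
    ((Amat lW H)⁻¹ * (H - HbarSpread H)
      - (Amat lW H)⁻¹ * (SigmaW H + (lW / (K : ℝ)) • 1) * (Amat lW H)⁻¹ * H
      + (lH * (K : ℝ)) • H)

/-- NC1 metric. -/
def NC1til (H : Matrix (Fin d) (Fin K × Fin n) ℝ) : ℝ :=
  (SigmaW H).trace / (SigmaB H).trace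

/-!
Freezing the optimal weights `W` at a proximal minimizer `H` gives the stationarity equation
`β H₀ = (β + λ_H) H + Wᵀ (W H - Y)`. Compare its within-class and between-class parts.

On within-class deviations `Y` vanishes, so they are multiplied by the matrix
`(β + λ_H) I + Wᵀ W`, which expands by at least the factor `β + λ_H`.

On the centered class means `E` of `H` and `E₀` of `H₀` the equation reads
`β E₀ = (β + λ_H) E - T`, where `T = Wᵀ (I - M) C`, the matrix `M = W H̄` collects the predictions
at the class means, and `C` is the centering matrix. The normal equations of ridge regression make
`M` symmetric with `λ_W W Wᵀ ≤ M - M²` in the Loewner order, whence `λ_W ‖T‖² ≤ ⟨E, T⟩`. Thus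
subtracting `T` strictly shortens `(β + λ_H) E` as soon as `β + λ_H > 1 / (2 λ_W)`, and the ratio
of the two parts drops.
-/

section Frobenius

variable {m p q : Type*} [Fintype m] [Fintype p] [Fintype q]

lemma frobSq_eq_trace (A : Matrix m p ℝ) : frobSq A = (Aᵀ * A).trace := by
  simp only [frobSq, trace, diag_apply, mul_apply, transpose_apply, ← sq]
  exact Finset.sum_comm

lemma frobSq_eq_trace' (A : Matrix m p ℝ) : frobSq A = (A * Aᵀ).trace := by
  rw [frobSq_eq_trace, trace_mul_comm]

lemma frobSq_nonneg (A : Matrix m p ℝ) : 0 ≤ frobSq A := by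
  unfold frobSq
  positivity

lemma frobSq_eq_zero_iff {A : Matrix m p ℝ} : frobSq A = 0 ↔ A = 0 := by
  rw [frobSq_eq_trace, ← conjTranspose_eq_transpose_of_trivial,
    trace_conjTranspose_mul_self_eq_zero_iff]

lemma frobSq_pos_iff {A : Matrix m p ℝ} : 0 < frobSq A ↔ A ≠ 0 := by
  rw [(frobSq_nonneg A).lt_iff_ne', ne_eq, frobSq_eq_zero_iff]

lemma frobSq_smul (c : ℝ) (A : Matrix m p ℝ) : frobSq (c • A) = c ^ 2 * frobSq A := by
  simp only [frobSq, Matrix.smul_apply, smul_eq_mul, mul_pow, Finset.mul_sum]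

lemma frobSq_add (A B : Matrix m p ℝ) :
    frobSq (A + B) = frobSq A + 2 * (Aᵀ * B).trace + frobSq B := by
  have hBA : (Bᵀ * A).trace = (Aᵀ * B).trace := by
    rw [← trace_transpose, transpose_mul, transpose_transpose]
  simp only [frobSq_eq_trace, transpose_add, Matrix.add_mul, Matrix.mul_add, trace_add, hBA]
  ring

lemma sq_mul_frobSq_le_frobSq_smul_add {a : ℝ} (ha : 0 ≤ a) (W : Matrix q m ℝ)
    (X : Matrix m p ℝ) : a ^ 2 * frobSq X ≤ frobSq (a • X + Wᵀ * (W * X)) := by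
  have hcross : ((a • X)ᵀ * (Wᵀ * (W * X))).trace = a * frobSq (W * X) := by
    rw [frobSq_eq_trace, transpose_smul, Matrix.smul_mul, trace_smul, smul_eq_mul, transpose_mul,
      Matrix.mul_assoc]
  rw [frobSq_add, frobSq_smul, hcross]
  have := mul_nonneg ha (frobSq_nonneg (W * X))
  linarith [frobSq_nonneg (Wᵀ * (W * X))]

lemma frobSq_smul_sub_lt {a c : ℝ} (hc : 0 < c) (ha : 1 / (2 * c) < a) {E T : Matrix m p ℝ}
    (hT : T ≠ 0) (hET : c * frobSq T ≤ (Eᵀ * T).trace) :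
    frobSq (a • E - T) < a ^ 2 * frobSq E := by
  have hT_lt : frobSq T < 2 * a * (Eᵀ * T).trace := by
    rw [div_lt_iff₀ (by positivity)] at ha
    have ha0 : 0 < a := by nlinarith
    nlinarith [frobSq_pos_iff.2 hT]
  rw [sub_eq_add_neg, ← neg_one_smul ℝ T, frobSq_add, frobSq_smul, frobSq_smul]
  simp only [transpose_smul, Matrix.smul_mul, Matrix.mul_smul, trace_smul, smul_eq_mul]
  linarith

end Frobenius

section Loewner

open scoped MatrixOrder

variable {m p q : Type*} [Fintype m] [Fintype p] [Fintype q]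

lemma one_sub_conjugate_le_of_isSelfAdjoint {R : Type*} [Ring R] [PartialOrder R] [StarRing R]
    [StarOrderedRing R] {a : R} (ha : IsSelfAdjoint a) (h : 0 ≤ a - a * a) :
    (1 - a) * (a - a * a) * (1 - a) ≤ a - a * a := by
  have hsq := (IsSelfAdjoint.of_nonneg h).mul_self_nonneg
  have hconj := ha.conjugate_nonneg h
  have hdiff : a - a * a - (1 - a) * (a - a * a) * (1 - a)
      = (a - a * a) * (a - a * a) + (a - a * a) * (a - a * a) + a * (a - a * a) * a := by
    noncomm_ring
  rw [← sub_nonneg, hdiff]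
  exact add_nonneg (add_nonneg hsq hsq) hconj

lemma self_mul_transpose_nonneg {r : Type*} [Finite r] (A : Matrix r p ℝ) : 0 ≤ A * Aᵀ := by
  simpa using (posSemidef_self_mul_conjTranspose A).nonneg

lemma mul_frobSq_transpose_mul_le_trace {c : ℝ} {A : Matrix m q ℝ} {B : Matrix m m ℝ}
    (h : c • (A * Aᵀ) ≤ B) (Z : Matrix m p ℝ) :
    c * frobSq (Aᵀ * Z) ≤ (Zᵀ * B * Z).trace := by
  have hnonneg := ((Matrix.le_iff.1 h).conjTranspose_mul_mul_same Z).trace_nonneg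
  rw [conjTranspose_eq_transpose_of_trivial, Matrix.mul_sub, Matrix.sub_mul, trace_sub,
    sub_nonneg] at hnonneg
  refine le_trans (le_of_eq ?_) hnonneg
  simp only [frobSq_eq_trace, transpose_mul, transpose_transpose, Matrix.mul_smul,
    Matrix.smul_mul, trace_smul, smul_eq_mul, Matrix.mul_assoc]

lemma mul_frobSq_residual_le_trace [DecidableEq m] {c : ℝ} (hc : 0 ≤ c) {M : Matrix m m ℝ}
    {W : Matrix m q ℝ} (hM : Mᵀ = M) (hWM : c • (W * Wᵀ) ≤ M - M * M) (Z : Matrix m p ℝ) :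
    c * frobSq (Wᵀ * (1 - M) * Z) ≤ (Zᵀ * (M - M * M) * Z).trace := by
  have hM_sa : IsSelfAdjoint M := by
    rwa [IsSelfAdjoint, star_eq_conjTranspose, conjTranspose_eq_transpose_of_trivial]
  have hR : (1 - M)ᵀ = 1 - M := by rw [transpose_sub, transpose_one, hM]
  have hnonneg : 0 ≤ M - M * M := (smul_nonneg hc (self_mul_transpose_nonneg W)).trans hWM
  have hle : c • (((1 - M) * W) * ((1 - M) * W)ᵀ) ≤ M - M * M := by
    calc c • (((1 - M) * W) * ((1 - M) * W)ᵀ) = (1 - M) * (c • (W * Wᵀ)) * (1 - M) := by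
          simp only [transpose_mul, hR, Matrix.mul_smul, Matrix.smul_mul, Matrix.mul_assoc]
      _ ≤ (1 - M) * (M - M * M) * (1 - M) :=
          ((IsSelfAdjoint.one _).sub hM_sa).conjugate_le_conjugate hWM
      _ ≤ M - M * M := one_sub_conjugate_le_of_isSelfAdjoint hM_sa hnonneg
  simpa only [transpose_mul, hR] using mul_frobSq_transpose_mul_le_trace hle Z

end Loewner

section ClassStatistics

/-- The orthogonal projection `I - n⁻¹ Yᵀ Y` of `ℝ^{Kn}`: multiplying `H` by it on the right
subtracts from every column the mean of its class. -/
def withinProj (K n : ℕ) : Matrix (Fin K × Fin n) (Fin K × Fin n) ℝ :=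
  1 - (1 / (n : ℝ)) • ((Ymat K n)ᵀ * Ymat K n)

/-- The centering matrix `I - K⁻¹ 1 1ᵀ`: multiplying a matrix by it on the right subtracts from
every column the mean of all columns. -/
def centering (K : ℕ) : Matrix (Fin K) (Fin K) ℝ :=
  1 - Matrix.of fun _ _ => 1 / (K : ℝ)

lemma Ymat_mul_transpose (K n : ℕ) : Ymat K n * (Ymat K n)ᵀ = (n : ℝ) • 1 := by
  ext i j
  simp [Matrix.mul_apply, Ymat, Matrix.one_apply, Fintype.sum_prod_type, eq_comm,
    apply_ite Finset.card]

lemma Ymat_mul_withinProj (hn : 0 < n) : Ymat K n * withinProj K n = 0 := by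
  have hn' : (n : ℝ) ≠ 0 := by positivity
  rw [withinProj, Matrix.mul_sub, Matrix.mul_smul, ← Matrix.mul_assoc, Ymat_mul_transpose]
  simp [smul_smul, hn']

lemma withinProj_transpose : (withinProj K n)ᵀ = withinProj K n := by
  simp [withinProj, transpose_mul]

lemma withinProj_mul_self (hn : 0 < n) : withinProj K n * withinProj K n = withinProj K n := by
  nth_rw 1 [withinProj]
  rw [Matrix.sub_mul, Matrix.smul_mul, Matrix.mul_assoc, Ymat_mul_withinProj hn, Matrix.mul_zero,
    smul_zero, sub_zero, Matrix.one_mul]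

variable (H : Matrix (Fin d) (Fin K × Fin n) ℝ)

lemma Hbar_eq_smul : Hbar H = (1 / (n : ℝ)) • (H * (Ymat K n)ᵀ) := by
  ext a k
  simp [Hbar, classMean, Ymat, Matrix.mul_apply, Fintype.sum_prod_type_right]

lemma HbarSpread_eq_mul : HbarSpread H = Hbar H * Ymat K n := by
  ext a q
  simp [HbarSpread, Hbar, Ymat, Matrix.mul_apply]

lemma mul_withinProj : H * withinProj K n = H - HbarSpread H := by
  rw [HbarSpread_eq_mul, Hbar_eq_smul, withinProj, Matrix.mul_sub, Matrix.mul_one,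
    Matrix.mul_smul, Matrix.smul_mul, Matrix.mul_assoc]

lemma Hbar_mul_centering_apply (a : Fin d) (k : Fin K) :
    (Hbar H * centering K) a k = classMean H k a - globalMean H a := by
  rw [centering, Matrix.mul_sub, Matrix.mul_one, Matrix.sub_apply, Matrix.mul_apply]
  simp only [Hbar, globalMean, classMean, Matrix.of_apply, Fintype.sum_prod_type,
    ← Finset.sum_mul, ← Finset.mul_sum]
  ring

lemma SigmaW_eq_smul : SigmaW H
    = (1 / ((K : ℝ) * n)) • ((H * withinProj K n) * (H * withinProj K n)ᵀ) := by
  rw [mul_withinProj]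
  rfl

lemma SigmaB_eq_smul : SigmaB H
    = (1 / (K : ℝ)) • ((Hbar H * centering K) * (Hbar H * centering K)ᵀ) := by
  ext a b
  simp only [Matrix.smul_apply, Matrix.mul_apply, transpose_apply, smul_eq_mul,
    ← Hbar_mul_centering_apply, SigmaB, Matrix.of_apply]

lemma trace_SigmaW : (SigmaW H).trace = 1 / ((K : ℝ) * n) * frobSq (H * withinProj K n) := by
  rw [SigmaW_eq_smul, trace_smul, smul_eq_mul, frobSq_eq_trace']

lemma trace_SigmaB : (SigmaB H).trace = 1 / (K : ℝ) * frobSq (Hbar H * centering K) := by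
  rw [SigmaB_eq_smul, trace_smul, smul_eq_mul, frobSq_eq_trace']

lemma NC1til_eq_div (hK : 0 < K) : NC1til H
    = frobSq (H * withinProj K n) / (n * frobSq (Hbar H * centering K)) := by
  have hK' : (K : ℝ) ≠ 0 := by positivity
  rw [NC1til, trace_SigmaW, trace_SigmaB]
  field_simp

variable {H}

lemma mul_withinProj_ne_zero (h : SigmaW H ≠ 0) : H * withinProj K n ≠ 0 := by
  intro h0
  exact h (by rw [SigmaW_eq_smul, h0, Matrix.zero_mul, smul_zero])

lemma Hbar_mul_centering_ne_zero (h : SigmaB H ≠ 0) : Hbar H * centering K ≠ 0 := by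
  intro h0
  exact h (by rw [SigmaB_eq_smul, h0, Matrix.zero_mul, smul_zero])

end ClassStatistics

section RidgeRegression

variable {lW lH : ℝ} {H : Matrix (Fin d) (Fin K × Fin n) ℝ} {W : Matrix (Fin K) (Fin d) ℝ}

lemma Wstar_mul (hn : 0 < n) (hlW : 0 < lW) (H : Matrix (Fin d) (Fin K × Fin n) ℝ) :
    Wstar lW H * (H * Hᵀ + ((n : ℝ) * lW) • 1) = Ymat K n * Hᵀ := by
  have hpd : (H * Hᵀ + ((n : ℝ) * lW) • (1 : Matrix (Fin d) (Fin d) ℝ)).PosDef := by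
    refine Matrix.PosDef.posSemidef_add ?_ (Matrix.PosDef.one.smul (by positivity))
    simpa using posSemidef_self_mul_conjTranspose H
  rw [Wstar, nonsing_inv_mul_cancel_right _ _ ((isUnit_iff_isUnit_det _).1 hpd.isUnit)]

lemma g_add_left (hn : 0 < n) (W D : Matrix (Fin K) (Fin d) ℝ)
    (H : Matrix (Fin d) (Fin K × Fin n) ℝ) :
    g lW lH (W + D) H = g lW lH W H
      + 1 / ((K : ℝ) * n)
        * ((W * (H * Hᵀ + ((n : ℝ) * lW) • 1) - Ymat K n * Hᵀ)ᵀ * D).trace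
      + (1 / (2 * (K : ℝ) * n) * frobSq (D * H) + lW / (2 * (K : ℝ)) * frobSq D) := by
  have hn' : (n : ℝ) ≠ 0 := by positivity
  have hres : (W + D) * H - Ymat K n = (W * H - Ymat K n) + D * H := by
    rw [Matrix.add_mul]
    abel
  have hfit : ((W * H - Ymat K n)ᵀ * (D * H)).trace
      = (((W * H - Ymat K n) * Hᵀ)ᵀ * D).trace := by
    rw [transpose_mul, transpose_transpose, Matrix.mul_assoc H, trace_mul_comm H, Matrix.mul_assoc]
  have hgrad : W * (H * Hᵀ + ((n : ℝ) * lW) • 1) - Ymat K n * Hᵀ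
      = (W * H - Ymat K n) * Hᵀ + ((n : ℝ) * lW) • W := by
    rw [Matrix.mul_add, Matrix.mul_smul, Matrix.mul_one, Matrix.sub_mul, Matrix.mul_assoc]
    abel
  rw [g, g, hres, frobSq_add, frobSq_add, hfit, hgrad, transpose_add, Matrix.add_mul, trace_add,
    transpose_smul, Matrix.smul_mul, trace_smul, smul_eq_mul]
  field_simp
  ring

lemma g_add_right (W : Matrix (Fin K) (Fin d) ℝ) (H D : Matrix (Fin d) (Fin K × Fin n) ℝ) :
    g lW lH W (H + D) = g lW lH W H
      + 1 / ((K : ℝ) * n) * ((Wᵀ * (W * H - Ymat K n) + lH • H)ᵀ * D).trace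
      + 1 / (2 * (K : ℝ) * n) * (frobSq (W * D) + lH * frobSq D) := by
  have hres : W * (H + D) - Ymat K n = (W * H - Ymat K n) + W * D := by
    rw [Matrix.mul_add]
    abel
  rw [g, g, hres, frobSq_add, frobSq_add, transpose_add, Matrix.add_mul, trace_add,
    transpose_smul, Matrix.smul_mul, trace_smul, smul_eq_mul, transpose_mul, transpose_transpose,
    Matrix.mul_assoc]
  ring

lemma Lcp_le_g (hn : 0 < n) (hlW : 0 < lW) (H : Matrix (Fin d) (Fin K × Fin n) ℝ)
    (W : Matrix (Fin K) (Fin d) ℝ) : Lcp lW lH H ≤ g lW lH W H := by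
  obtain ⟨D, rfl⟩ : ∃ D, W = Wstar lW H + D := ⟨W - Wstar lW H, by abel⟩
  rw [g_add_left hn, Wstar_mul hn hlW, sub_self, transpose_zero, Matrix.zero_mul, trace_zero,
    mul_zero, add_zero]
  have hDH := frobSq_nonneg (D * H)
  have hD := frobSq_nonneg D
  exact le_add_of_nonneg_right (by positivity)

/-- The weights can be frozen at `W*(H)` when `H` is perturbed: the resulting quadratic function of
the perturbation dominates the objective and touches it at `H`. -/
theorem smul_eq_add_of_proximal_minimizer (hK : 0 < K) (hn : 0 < n) (hlW : 0 < lW) {β : ℝ}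
    {H H₀ : Matrix (Fin d) (Fin K × Fin n) ℝ}
    (hmin : ∀ H' : Matrix (Fin d) (Fin K × Fin n) ℝ,
      Lcp lW lH H + (β / (2 * (K : ℝ) * n)) * frobSq (H - H₀)
        ≤ Lcp lW lH H' + (β / (2 * (K : ℝ) * n)) * frobSq (H' - H₀)) :
    β • H₀ = (β + lH) • H + (Wstar lW H)ᵀ * (Wstar lW H * H - Ymat K n) := by
  set W := Wstar lW H
  set G := Wᵀ * (W * H - Ymat K n) + lH • H + β • (H - H₀) with hG
  have hquad : ∀ s : ℝ, 0 ≤ 1 / (2 * (K : ℝ) * n) * (frobSq (W * G) + (lH + β) * frobSq G)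
      * (s * s) + 1 / ((K : ℝ) * n) * frobSq G * s + 0 := by
    intro s
    have hle : g lW lH W H + (β / (2 * (K : ℝ) * n)) * frobSq (H - H₀)
        ≤ g lW lH W (H + s • G) + (β / (2 * (K : ℝ) * n)) * frobSq (H + s • G - H₀) :=
      (hmin _).trans (add_le_add_left (Lcp_le_g hn hlW _ W) _)
    have hcross : frobSq G = ((Wᵀ * (W * H - Ymat K n) + lH • H)ᵀ * G).trace
        + β * ((H - H₀)ᵀ * G).trace := by
      rw [frobSq_eq_trace, ← smul_eq_mul, ← trace_smul, ← Matrix.smul_mul, ← transpose_smul,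
        ← trace_add, ← Matrix.add_mul, ← transpose_add, ← hG]
    rw [g_add_right, add_sub_right_comm, frobSq_add (H - H₀)] at hle
    simp only [Matrix.mul_smul, trace_smul, smul_eq_mul, frobSq_smul] at hle
    linear_combination hle - 1 / ((K : ℝ) * n) * s * hcross
  have hlin : 1 / ((K : ℝ) * n) * frobSq G = 0 := by
    have hdisc := discrim_le_zero hquad
    rw [discrim, mul_zero, sub_zero] at hdisc
    exact pow_eq_zero_iff two_ne_zero |>.1 (hdisc.antisymm (sq_nonneg _))
  have hG0 : G = 0 :=
    frobSq_eq_zero_iff.1 ((mul_eq_zero.1 hlin).resolve_left (by positivity))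
  rw [← sub_eq_zero, ← neg_eq_zero, ← hG0, hG, smul_sub, add_smul]
  abel

lemma mul_Ymat_transpose (hW : W * (H * Hᵀ + ((n : ℝ) * lW) • 1) = Ymat K n * Hᵀ) :
    H * (Ymat K n)ᵀ = (H * Hᵀ + ((n : ℝ) * lW) • 1) * Wᵀ := by
  simpa using (congrArg transpose hW).symm

lemma mul_Hbar_eq (hn : 0 < n)
    (hW : W * (H * Hᵀ + ((n : ℝ) * lW) • 1) = Ymat K n * Hᵀ) :
    W * Hbar H = (1 / (n : ℝ)) • ((W * H) * (W * H)ᵀ) + lW • (W * Wᵀ) := by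
  have hn' : (n : ℝ) ≠ 0 := by positivity
  rw [Hbar_eq_smul, mul_Ymat_transpose hW]
  simp only [Matrix.add_mul, Matrix.smul_mul, Matrix.one_mul, Matrix.mul_add, Matrix.mul_smul,
    smul_add, smul_smul, transpose_mul, Matrix.mul_assoc]
  rw [← mul_assoc, one_div_mul_cancel hn', one_mul]

lemma transpose_mul_Hbar (hn : 0 < n)
    (hW : W * (H * Hᵀ + ((n : ℝ) * lW) • 1) = Ymat K n * Hᵀ) :
    (W * Hbar H)ᵀ = W * Hbar H := by
  simp [mul_Hbar_eq hn hW, transpose_mul]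

open scoped MatrixOrder in
lemma smul_mul_transpose_le_mul_Hbar_sub (hn : 0 < n)
    (hW : W * (H * Hᵀ + ((n : ℝ) * lW) • 1) = Ymat K n * Hᵀ) :
    lW • (W * Wᵀ) ≤ W * Hbar H - (W * Hbar H) * (W * Hbar H) := by
  have hsq : (W * Hbar H) * (W * Hbar H) = (1 / (n : ℝ)) • ((W * H) * (W * H)ᵀ)
      - (1 / (n : ℝ)) • ((W * H * withinProj K n) * (W * H * withinProj K n)ᵀ) := by
    nth_rw 2 [← transpose_mul_Hbar hn hW]
    rw [transpose_mul (W * H), withinProj_transpose, ← Matrix.mul_assoc,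
      Matrix.mul_assoc (W * H) (withinProj K n) (withinProj K n), withinProj_mul_self hn,
      withinProj, Hbar_eq_smul]
    simp only [Matrix.mul_sub, Matrix.sub_mul, Matrix.mul_one, transpose_mul, transpose_smul,
      transpose_transpose, Matrix.mul_smul, Matrix.smul_mul, smul_smul, smul_sub,
      Matrix.mul_assoc, sub_sub_cancel]
  have hdiff : W * Hbar H - (W * Hbar H) * (W * Hbar H) - lW • (W * Wᵀ)
      = (1 / (n : ℝ)) • ((W * H * withinProj K n) * (W * H * withinProj K n)ᵀ) := by
    rw [hsq, mul_Hbar_eq hn hW]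
    abel
  rw [← sub_nonneg, hdiff]
  exact smul_nonneg (by positivity) (self_mul_transpose_nonneg _)

lemma trace_transpose_Hbar_mul_residual {p : Type*} [Fintype p] (hn : 0 < n)
    (hW : W * (H * Hᵀ + ((n : ℝ) * lW) • 1) = Ymat K n * Hᵀ) (Z : Matrix (Fin K) p ℝ) :
    ((Hbar H * Z)ᵀ * (Wᵀ * (1 - W * Hbar H) * Z)).trace
      = (Zᵀ * (W * Hbar H - (W * Hbar H) * (W * Hbar H)) * Z).trace := by
  have hfactor : W * Hbar H - (W * Hbar H) * (W * Hbar H)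
      = (Hbar H)ᵀ * Wᵀ * (1 - W * Hbar H) := by
    rw [← transpose_mul, transpose_mul_Hbar hn hW, Matrix.mul_sub, Matrix.mul_one]
  rw [hfactor]
  simp only [transpose_mul, Matrix.mul_assoc]

lemma Hbar_mul_eq_zero_of_transpose_mul_eq_zero {p : Type*}
    (hW : W * (H * Hᵀ + ((n : ℝ) * lW) • 1) = Ymat K n * Hᵀ)
    {Z : Matrix (Fin K) p ℝ} (hZ : Wᵀ * Z = 0) : Hbar H * Z = 0 := by
  rw [Hbar_eq_smul, mul_Ymat_transpose hW, Matrix.smul_mul, Matrix.mul_assoc, hZ,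
    Matrix.mul_zero, smul_zero]

end RidgeRegression

section Proximal

variable {lW a β : ℝ} {H H₀ : Matrix (Fin d) (Fin K × Fin n) ℝ} {W : Matrix (Fin K) (Fin d) ℝ}

lemma sq_mul_frobSq_within_le (hn : 0 < n) (ha : 0 ≤ a)
    (hstat : β • H₀ = a • H + Wᵀ * (W * H - Ymat K n)) :
    a ^ 2 * frobSq (H * withinProj K n) ≤ β ^ 2 * frobSq (H₀ * withinProj K n) := by
  have hwithin : β • (H₀ * withinProj K n)
      = a • (H * withinProj K n) + Wᵀ * (W * (H * withinProj K n)) := by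
    rw [← Matrix.smul_mul, hstat, Matrix.add_mul, Matrix.smul_mul, Matrix.mul_assoc,
      Matrix.sub_mul, Ymat_mul_withinProj hn, sub_zero, Matrix.mul_assoc]
  rw [← frobSq_smul β, hwithin]
  exact sq_mul_frobSq_le_frobSq_smul_add ha W _

lemma smul_Hbar_eq_sub (hn : 0 < n) (hstat : β • H₀ = a • H + Wᵀ * (W * H - Ymat K n)) :
    β • Hbar H₀ = a • Hbar H - Wᵀ * (1 - W * Hbar H) := by
  have hn' : (n : ℝ) ≠ 0 := by positivity
  simp only [Hbar_eq_smul]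
  rw [smul_comm, ← Matrix.smul_mul, hstat, Matrix.add_mul, Matrix.mul_assoc, Matrix.sub_mul,
    Ymat_mul_transpose]
  simp only [Matrix.mul_sub, Matrix.mul_smul, Matrix.smul_mul, smul_add, smul_sub, smul_smul,
    Matrix.mul_assoc, Matrix.mul_one, one_div_mul_cancel hn', one_smul, mul_comm a]
  abel

lemma sq_mul_frobSq_between_lt {p : Type*} [Fintype p] (hn : 0 < n) (hlW : 0 < lW) (hβ : β ≠ 0)
    (ha : 1 / (2 * lW) < a) (hW : W * (H * Hᵀ + ((n : ℝ) * lW) • 1) = Ymat K n * Hᵀ)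
    (hstat : β • H₀ = a • H + Wᵀ * (W * H - Ymat K n)) {Z : Matrix (Fin K) p ℝ}
    (hZ : Hbar H₀ * Z ≠ 0) :
    β ^ 2 * frobSq (Hbar H₀ * Z) < a ^ 2 * frobSq (Hbar H * Z) := by
  have hbetween : β • (Hbar H₀ * Z) = a • (Hbar H * Z) - Wᵀ * (1 - W * Hbar H) * Z := by
    rw [← Matrix.smul_mul, smul_Hbar_eq_sub hn hstat, Matrix.sub_mul, Matrix.smul_mul]
  have hsymm := transpose_mul_Hbar hn hW
  have hle := smul_mul_transpose_le_mul_Hbar_sub hn hW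
  have hinner := trace_transpose_Hbar_mul_residual hn hW Z
  set T := Wᵀ * (1 - W * Hbar H) * Z
  have hT_le : lW * frobSq T ≤ ((Hbar H * Z)ᵀ * T).trace :=
    hinner ▸ mul_frobSq_residual_le_trace hlW.le hsymm hle Z
  have hWZ_le : lW * frobSq (Wᵀ * Z) ≤ ((Hbar H * Z)ᵀ * T).trace :=
    hinner ▸ mul_frobSq_transpose_mul_le_trace hle Z
  have hT : T ≠ 0 := by
    intro hT0
    rw [hT0, Matrix.mul_zero, trace_zero] at hWZ_le
    have hWZ : Wᵀ * Z = 0 := frobSq_eq_zero_iff.1 <|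
      (nonpos_of_mul_nonpos_right hWZ_le hlW).antisymm (frobSq_nonneg _)
    rw [hT0, Hbar_mul_eq_zero_of_transpose_mul_eq_zero hW hWZ, smul_zero, sub_zero] at hbetween
    exact hZ ((smul_eq_zero.1 hbetween).resolve_left hβ)
  rw [← frobSq_smul β, hbetween]
  exact frobSq_smul_sub_lt hlW ha hT hT_le

theorem nc1_decreases_for_proximal_minimizer_general {lH : ℝ} (hK : 0 < K) (hn : 0 < n)
    (hlW : 0 < lW) (hβ : 0 < β) (hβ_gt : 1 / (2 * lW) < β + lH)
    (hW0 : SigmaW H₀ ≠ 0) (hB0 : SigmaB H₀ ≠ 0)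
    (hmin : ∀ H' : Matrix (Fin d) (Fin K × Fin n) ℝ,
      Lcp lW lH H + (β / (2 * (K : ℝ) * n)) * frobSq (H - H₀)
        ≤ Lcp lW lH H' + (β / (2 * (K : ℝ) * n)) * frobSq (H' - H₀)) :
    0 < (SigmaB H).trace ∧ NC1til H < NC1til H₀ := by
  have ha : 0 < β + lH := lt_trans (by positivity) hβ_gt
  have hstat := smul_eq_add_of_proximal_minimizer hK hn hlW hmin
  have hwithin := sq_mul_frobSq_within_le hn ha.le hstat
  have hbetween := sq_mul_frobSq_between_lt hn hlW hβ.ne' hβ_gt (Wstar_mul hn hlW H) hstat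
    (Hbar_mul_centering_ne_zero hB0)
  have hW0_pos := frobSq_pos_iff.2 (mul_withinProj_ne_zero hW0)
  have hB0_pos := frobSq_pos_iff.2 (Hbar_mul_centering_ne_zero hB0)
  have hB_pos : 0 < frobSq (Hbar H * centering K) :=
    pos_of_mul_pos_right (lt_trans (by positivity) hbetween) (sq_nonneg _)
  refine ⟨by rw [trace_SigmaB]; positivity, ?_⟩
  have hlt := div_lt_div₀' hwithin (mul_lt_mul_of_pos_left hbetween (Nat.cast_pos.2 hn))
    (by positivity) (by positivity)
  simpa only [NC1til_eq_div _ hK, mul_left_comm (n : ℝ), mul_div_mul_left _ _ (pow_pos ha 2).ne',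
    mul_div_mul_left _ _ (pow_pos hβ 2).ne'] using hlt

end Proximal

/-- Corollary: decrease of within-class variability: if `Σ_W(H₀) ≠ 0` and
`Σ_B(H₀) ≠ 0`, then there is `C = C(H₀) > 0` such that for every `β > C`, any global minimizer
`H_{1/β}` of `H ↦ L(H) + (β/(2Kn))‖H − H₀‖_F²` satisfies `tr Σ_B(H_{1/β}) > 0` and
`ÑC₁(H_{1/β}) < ÑC₁(H₀)`. -/
theorem nc1_decreases_for_proximal_minimizer
    (K n d : ℕ) (hK : 0 < K) (hn : 0 < n) (hdK : K ≤ d)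
    (lW lH : ℝ) (hlW : 0 < lW) (hlH : 0 ≤ lH)
    (H₀ : Matrix (Fin d) (Fin K × Fin n) ℝ)
    (hW0 : SigmaW H₀ ≠ 0) (hB0 : SigmaB H₀ ≠ 0)
    (Hm : ℝ → Matrix (Fin d) (Fin K × Fin n) ℝ)
    (hmin : ∀ β : ℝ, 0 < β →
      ∀ H' : Matrix (Fin d) (Fin K × Fin n) ℝ,
        Lcp lW lH (Hm β) + (β / (2 * (K : ℝ) * n)) * frobSq (Hm β - H₀)
          ≤ Lcp lW lH H' + (β / (2 * (K : ℝ) * n)) * frobSq (H' - H₀)) :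
    ∃ C : ℝ, 0 < C ∧ ∀ β : ℝ, C < β →
      0 < (SigmaB (Hm β)).trace ∧ NC1til (Hm β) < NC1til H₀ := by
  refine ⟨1 / (2 * lW), by positivity, fun β hβ => ?_⟩
  have hβ0 : 0 < β := lt_trans (by positivity) hβ
  exact nc1_decreases_for_proximal_minimizer_general hK hn hlW hβ0 (by linarith) hW0 hB0
    (hmin β hβ0)

end
end

section
/- Let λ_W > 0 and λ_H ≥ 0. The gradient of the central-path loss is globally Lipschitz with respect to the Frobenius norm: for all H, H' ∈ ℝ^{d×Kn}, ‖∇L(H) − ∇L(H')‖_F ≤ (1/(Kn)) (10/λ_W + λ_H) ‖H − H'‖_F. -/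
open Matrix Filter
open scoped BigOperators

noncomputable section

variable {K n d : ℕ}

/-!
Put `μ = n λ_W`, `S = (HᵀH + μ)⁻¹`, `B = H S = (HHᵀ + μ)⁻¹ H`, and let `P` be the orthogonal
projection averaging over classes, so that `YᵀY = n P`. Eliminating `W` leaves
`∇L(H) = (λ_H / (K n)) H - (n λ_W / K) B P S`. By the spectral bounds `‖S‖ ≤ 1 / μ` and
`‖B‖ ≤ 1 / (2 √μ)` together with the resolvent identities
`S - S' = S (H' - H)ᵀ B' + Bᵀ (H' - H) S'` and `B - B' = μ R (H - H') S' - B (H - H')ᵀ B'`, where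
`R = (HHᵀ + μ)⁻¹`, the map `H ↦ B P S` is Lipschitz with constant `7 / (4 μ²)`.
-/

section FrobeniusNorm

open scoped Matrix.Norms.Frobenius

variable {m n : Type*} [Fintype m] [Fintype n]

lemma frobNorm_eq_norm (M : Matrix m n ℝ) : frobNorm M = ‖M‖ := by
  simp [frobNorm, frobSq, frobenius_norm_def, Real.sqrt_eq_rpow]

lemma frobNorm_nonneg (M : Matrix m n ℝ) : 0 ≤ frobNorm M :=
  Real.sqrt_nonneg _

lemma frobNorm_add_le (M N : Matrix m n ℝ) : frobNorm (M + N) ≤ frobNorm M + frobNorm N := by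
  simpa only [frobNorm_eq_norm] using norm_add_le M N

lemma frobNorm_sub_le (M N : Matrix m n ℝ) : frobNorm (M - N) ≤ frobNorm M + frobNorm N := by
  simpa only [frobNorm_eq_norm] using norm_sub_le M N

lemma frobNorm_sub_rev (M N : Matrix m n ℝ) : frobNorm (M - N) = frobNorm (N - M) := by
  simpa only [frobNorm_eq_norm] using norm_sub_rev M N

lemma frobNorm_smul (c : ℝ) (M : Matrix m n ℝ) : frobNorm (c • M) = |c| * frobNorm M := by
  simpa only [frobNorm_eq_norm, Real.norm_eq_abs] using norm_smul c M

lemma frobNorm_transpose (M : Matrix m n ℝ) : frobNorm Mᵀ = frobNorm M := by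
  simpa only [frobNorm_eq_norm] using frobenius_norm_transpose M

lemma frobSq_eq_sum_norm_col_sq (M : Matrix m n ℝ) :
    frobSq M = ∑ j, ‖WithLp.toLp 2 (M.col j)‖ ^ 2 := by
  simp [frobSq, EuclideanSpace.norm_sq_eq, Finset.sum_comm (γ := m)]

end FrobeniusNorm

section OperatorNorm

open scoped Matrix.Norms.L2Operator

variable {m n p q : Type*} [Fintype m] [Fintype n] [Fintype p] [Fintype q] [DecidableEq n]

lemma frobNorm_mul_le_opNorm_mul (A : Matrix m n ℝ) (X : Matrix n q ℝ) :
    frobNorm (A * X) ≤ ‖A‖ * frobNorm X := by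
  refine Real.sqrt_le_iff.2 ⟨mul_nonneg (norm_nonneg _) (frobNorm_nonneg _), ?_⟩
  have hX : 0 ≤ frobSq X := Finset.sum_nonneg fun _ _ ↦ Finset.sum_nonneg fun _ _ ↦ sq_nonneg _
  rw [mul_pow, frobNorm, Real.sq_sqrt hX]
  simp only [frobSq_eq_sum_norm_col_sq, Finset.mul_sum, ← mul_pow]
  gcongr with j
  exact l2_opNorm_mulVec A (WithLp.toLp 2 (X.col j))

lemma frobNorm_mul_le_mul_opNorm (X : Matrix q m ℝ) (A : Matrix m n ℝ) :
    frobNorm (X * A) ≤ frobNorm X * ‖A‖ := by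
  classical
  rw [← frobNorm_transpose, transpose_mul, ← frobNorm_transpose X, mul_comm (frobNorm _),
    ← l2_opNorm_conjTranspose A, conjTranspose_eq_transpose_of_trivial]
  exact frobNorm_mul_le_opNorm_mul Aᵀ Xᵀ

lemma frobNorm_mul_mul_le [DecidableEq q] (A : Matrix m n ℝ) (X : Matrix n p ℝ) (B : Matrix p q ℝ) :
    frobNorm (A * X * B) ≤ ‖A‖ * frobNorm X * ‖B‖ :=
  (frobNorm_mul_le_mul_opNorm _ _).trans <| by
    gcongr
    exact frobNorm_mul_le_opNorm_mul A X

lemma opNorm_le_one_of_posSemidef_one_sub {A : Matrix m n ℝ} (hA : (1 - Aᵀ * A).PosSemidef) :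
    ‖A‖ ≤ 1 := by
  refine ContinuousLinearMap.opNorm_le_bound _ zero_le_one fun x ↦ ?_
  have hx : x.ofLp ⬝ᵥ (1 - Aᵀ * A) *ᵥ x.ofLp = ‖x‖ ^ 2 - ‖WithLp.toLp 2 (A *ᵥ x.ofLp)‖ ^ 2 := by
    rw [sub_mulVec, one_mulVec, dotProduct_sub, ← mulVec_mulVec, dotProduct_mulVec x.ofLp Aᵀ,
      vecMul_transpose]
    rw [EuclideanSpace.real_norm_sq_eq, EuclideanSpace.real_norm_sq_eq]
    simp only [dotProduct, sq]
  have hnonneg : 0 ≤ x.ofLp ⬝ᵥ (1 - Aᵀ * A) *ᵥ x.ofLp := by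
    simpa using hA.dotProduct_mulVec_nonneg x.ofLp
  rw [hx, sub_nonneg] at hnonneg
  rw [one_mul]
  exact le_of_sq_le_sq hnonneg (norm_nonneg _)

end OperatorNorm

section GramResolvent

open scoped Matrix.Norms.L2Operator

variable {m n : Type*} [Fintype m] [Fintype n] [DecidableEq n] {μ : ℝ}

/-- The resolvent `(HᵀH + μ)⁻¹` of the Gram matrix of the columns of `H`, taken at `-μ`. The
resolvent `(HHᵀ + μ)⁻¹` of the Gram matrix of the rows is `gramResolvent μ Hᵀ`. -/
def gramResolvent (μ : ℝ) (H : Matrix m n ℝ) : Matrix n n ℝ :=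
  (Hᵀ * H + μ • 1)⁻¹

/-- The transpose `H (HᵀH + μ)⁻¹` of the Tikhonov-regularised pseudo-inverse of `H`. -/
def tikhonov (μ : ℝ) (H : Matrix m n ℝ) : Matrix m n ℝ :=
  H * gramResolvent μ H

lemma isUnit_det_gram_add_smul_one (hμ : 0 < μ) (H : Matrix m n ℝ) :
    IsUnit (Hᵀ * H + μ • 1).det :=
  (isUnit_iff_isUnit_det _).1
    (PosDef.posSemidef_add (posSemidef_conjTranspose_mul_self H) (PosDef.one.smul hμ)).isUnit

lemma gram_add_mul_gramResolvent (hμ : 0 < μ) (H : Matrix m n ℝ) :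
    (Hᵀ * H + μ • 1) * gramResolvent μ H = 1 :=
  mul_nonsing_inv _ (isUnit_det_gram_add_smul_one hμ H)

lemma gramResolvent_mul_gram_add (hμ : 0 < μ) (H : Matrix m n ℝ) :
    gramResolvent μ H * (Hᵀ * H + μ • 1) = 1 :=
  nonsing_inv_mul _ (isUnit_det_gram_add_smul_one hμ H)

lemma transpose_gramResolvent (μ : ℝ) (H : Matrix m n ℝ) :
    (gramResolvent μ H)ᵀ = gramResolvent μ H := by
  simp [gramResolvent, transpose_nonsing_inv]

lemma gramResolvent_transpose_mul [DecidableEq m] (hμ : 0 < μ) (H : Matrix m n ℝ) :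
    gramResolvent μ Hᵀ * H = tikhonov μ H := by
  have hcomm : (Hᵀᵀ * Hᵀ + μ • 1) * H = H * (Hᵀ * H + μ • 1) := by
    simp [Matrix.add_mul, Matrix.mul_add, Matrix.mul_assoc]
  calc gramResolvent μ Hᵀ * H
      = gramResolvent μ Hᵀ * (H * (Hᵀ * H + μ • 1)) * gramResolvent μ H := by
        rw [Matrix.mul_assoc, Matrix.mul_assoc, gram_add_mul_gramResolvent hμ, Matrix.mul_one]
    _ = tikhonov μ H := by
        rw [← hcomm, ← Matrix.mul_assoc, gramResolvent_mul_gram_add hμ, Matrix.one_mul, tikhonov]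

lemma transpose_mul_tikhonov (hμ : 0 < μ) (H : Matrix m n ℝ) :
    Hᵀ * tikhonov μ H = 1 - μ • gramResolvent μ H := by
  rw [tikhonov, ← Matrix.mul_assoc, ← gram_add_mul_gramResolvent hμ H, Matrix.add_mul, smul_mul,
    Matrix.one_mul, add_sub_cancel_right]

lemma transpose_tikhonov (μ : ℝ) (H : Matrix m n ℝ) :
    (tikhonov μ H)ᵀ = gramResolvent μ H * Hᵀ := by
  rw [tikhonov, transpose_mul, transpose_gramResolvent]

lemma transpose_tikhonov_mul_tikhonov (hμ : 0 < μ) (H : Matrix m n ℝ) :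
    (tikhonov μ H)ᵀ * tikhonov μ H
      = gramResolvent μ H - μ • (gramResolvent μ H * gramResolvent μ H) := by
  rw [transpose_tikhonov, Matrix.mul_assoc, transpose_mul_tikhonov hμ, Matrix.mul_sub,
    Matrix.mul_one, Matrix.mul_smul]

lemma transpose_mul_self_one_sub_smul_gramResolvent (μ c : ℝ) (H : Matrix m n ℝ) :
    (1 - c • gramResolvent μ H)ᵀ * (1 - c • gramResolvent μ H)
      = 1 - (2 * c) • gramResolvent μ H + c ^ 2 • (gramResolvent μ H * gramResolvent μ H) := by
  rw [transpose_sub, transpose_smul, transpose_one, transpose_gramResolvent]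
  simp only [Matrix.mul_sub, Matrix.sub_mul, smul_mul, Matrix.mul_smul, Matrix.mul_one,
    Matrix.one_mul]
  module

lemma opNorm_gramResolvent_le (hμ : 0 < μ) (H : Matrix m n ℝ) :
    ‖gramResolvent μ H‖ ≤ 1 / μ := by
  set S := gramResolvent μ H with hS
  set B := tikhonov μ H
  have hsq : 1 - (μ • S)ᵀ * (μ • S) = (1 - μ • S)ᵀ * (1 - μ • S) + (2 * μ) • (Bᵀ * B) := by
    rw [transpose_mul_self_one_sub_smul_gramResolvent, transpose_tikhonov_mul_tikhonov hμ,
      transpose_smul, hS, transpose_gramResolvent, smul_mul, Matrix.mul_smul]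
    module
  have hle : ‖μ • S‖ ≤ 1 := opNorm_le_one_of_posSemidef_one_sub <| hsq ▸
    (posSemidef_conjTranspose_mul_self _).add
      ((posSemidef_conjTranspose_mul_self B).smul (by positivity))
  rw [norm_smul, Real.norm_of_nonneg hμ.le] at hle
  rwa [le_div_iff₀' hμ]

lemma opNorm_tikhonov_le (hμ : 0 < μ) (H : Matrix m n ℝ) :
    ‖tikhonov μ H‖ ≤ 1 / (2 * √μ) := by
  set S := gramResolvent μ H
  set B := tikhonov μ H
  have hsq : 1 - ((2 * √μ) • B)ᵀ * ((2 * √μ) • B) = (1 - (2 * μ) • S)ᵀ * (1 - (2 * μ) • S) := by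
    have hsqrt : 2 * √μ * (2 * √μ) = 4 * μ := by linear_combination 4 * Real.mul_self_sqrt hμ.le
    rw [transpose_mul_self_one_sub_smul_gramResolvent, transpose_smul, smul_mul, Matrix.mul_smul,
      smul_smul, hsqrt, transpose_tikhonov_mul_tikhonov hμ]
    module
  have hle : ‖(2 * √μ) • B‖ ≤ 1 :=
    opNorm_le_one_of_posSemidef_one_sub (hsq ▸ posSemidef_conjTranspose_mul_self _)
  rw [norm_smul, Real.norm_of_nonneg (by positivity)] at hle
  rwa [le_div_iff₀' (by positivity)]

lemma gramResolvent_sub_gramResolvent (hμ : 0 < μ) (H H' : Matrix m n ℝ) :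
    gramResolvent μ H - gramResolvent μ H'
      = gramResolvent μ H * (H' - H)ᵀ * tikhonov μ H'
        + (tikhonov μ H)ᵀ * (H' - H) * gramResolvent μ H' := by
  set S := gramResolvent μ H
  set S' := gramResolvent μ H'
  calc S - S' = S * ((H'ᵀ * H' + μ • 1) * S') - S * (Hᵀ * H + μ • 1) * S' := by
        rw [gram_add_mul_gramResolvent hμ, gramResolvent_mul_gram_add hμ, Matrix.mul_one,
          Matrix.one_mul]
    _ = S * (H' - H)ᵀ * (H' * S') + S * Hᵀ * (H' - H) * S' := by
        simp only [transpose_sub, Matrix.mul_sub, Matrix.sub_mul, Matrix.mul_add, Matrix.add_mul,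
          Matrix.mul_assoc]
        abel
    _ = _ := by rw [transpose_tikhonov, tikhonov]

lemma tikhonov_sub_tikhonov [DecidableEq m] (hμ : 0 < μ) (H H' : Matrix m n ℝ) :
    tikhonov μ H - tikhonov μ H'
      = μ • (gramResolvent μ Hᵀ * (H - H') * gramResolvent μ H')
        - tikhonov μ H * (H - H')ᵀ * tikhonov μ H' := by
  set R := gramResolvent μ Hᵀ
  set S' := gramResolvent μ H'
  calc tikhonov μ H - tikhonov μ H'
      = R * H * ((H'ᵀ * H' + μ • 1) * S') - R * (Hᵀᵀ * Hᵀ + μ • 1) * (H' * S') := by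
        rw [gram_add_mul_gramResolvent hμ, gramResolvent_mul_gram_add hμ, Matrix.mul_one,
          Matrix.one_mul, gramResolvent_transpose_mul hμ, tikhonov, tikhonov]
    _ = μ • (R * (H - H') * S') - R * H * (H - H')ᵀ * (H' * S') := by
        simp only [transpose_sub, transpose_transpose, Matrix.mul_sub, Matrix.sub_mul,
          Matrix.mul_add, Matrix.add_mul, Matrix.mul_smul, smul_mul, smul_sub, Matrix.mul_one,
          Matrix.one_mul, Matrix.mul_assoc]
        abel
    _ = _ := by rw [gramResolvent_transpose_mul hμ, ← tikhonov]

lemma frobNorm_gramResolvent_sub_le (hμ : 0 < μ) (H H' : Matrix m n ℝ) :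
    frobNorm (gramResolvent μ H - gramResolvent μ H') ≤ 1 / (μ * √μ) * frobNorm (H - H') := by
  classical
  have hH := frobNorm_nonneg (H' - H)
  have hB : ‖(tikhonov μ H)ᵀ‖ ≤ 1 / (2 * √μ) := by
    rw [← conjTranspose_eq_transpose_of_trivial, l2_opNorm_conjTranspose]
    exact opNorm_tikhonov_le hμ H
  rw [gramResolvent_sub_gramResolvent hμ]
  calc _ ≤ frobNorm (gramResolvent μ H * (H' - H)ᵀ * tikhonov μ H')
          + frobNorm ((tikhonov μ H)ᵀ * (H' - H) * gramResolvent μ H') := frobNorm_add_le _ _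
    _ ≤ 1 / μ * frobNorm (H - H') * (1 / (2 * √μ))
          + 1 / (2 * √μ) * frobNorm (H - H') * (1 / μ) := by
        rw [← frobNorm_sub_rev H']
        grw [frobNorm_mul_mul_le, frobNorm_mul_mul_le, frobNorm_transpose, hB,
          opNorm_gramResolvent_le hμ, opNorm_gramResolvent_le hμ, opNorm_tikhonov_le hμ]
    _ = 1 / (μ * √μ) * frobNorm (H - H') := by
        field_simp
        ring

lemma frobNorm_tikhonov_sub_le (hμ : 0 < μ) (H H' : Matrix m n ℝ) :
    frobNorm (tikhonov μ H - tikhonov μ H') ≤ 5 / (4 * μ) * frobNorm (H - H') := by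
  classical
  have hH := frobNorm_nonneg (H - H')
  rw [tikhonov_sub_tikhonov hμ]
  calc _ ≤ frobNorm (μ • (gramResolvent μ Hᵀ * (H - H') * gramResolvent μ H'))
          + frobNorm (tikhonov μ H * (H - H')ᵀ * tikhonov μ H') := frobNorm_sub_le _ _
    _ ≤ μ * (1 / μ * frobNorm (H - H') * (1 / μ))
          + 1 / (2 * √μ) * frobNorm (H - H') * (1 / (2 * √μ)) := by
        rw [frobNorm_smul, abs_of_pos hμ]
        grw [frobNorm_mul_mul_le, frobNorm_mul_mul_le, frobNorm_transpose,
          opNorm_gramResolvent_le hμ, opNorm_gramResolvent_le hμ, opNorm_tikhonov_le hμ,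
          opNorm_tikhonov_le hμ]
    _ = 5 / (4 * μ) * frobNorm (H - H') := by
        field_simp
        rw [Real.sq_sqrt hμ.le]
        ring

lemma frobNorm_tikhonov_mul_gramResolvent_sub_le (hμ : 0 < μ) (P : Matrix n n ℝ)
    (H H' : Matrix m n ℝ) :
    frobNorm (tikhonov μ H * P * gramResolvent μ H - tikhonov μ H' * P * gramResolvent μ H')
      ≤ 7 * ‖P‖ / (4 * μ ^ 2) * frobNorm (H - H') := by
  have hH := frobNorm_nonneg (H - H')
  set B := tikhonov μ H
  set B' := tikhonov μ H'
  set S := gramResolvent μ H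
  set S' := gramResolvent μ H'
  have htel : B * P * S - B' * P * S' = (B - B') * (P * S) + B' * P * (S - S') := by
    simp only [Matrix.mul_sub, Matrix.sub_mul, Matrix.mul_assoc]
    abel
  rw [htel]
  calc _ ≤ frobNorm ((B - B') * (P * S)) + frobNorm (B' * P * (S - S')) := frobNorm_add_le _ _
    _ ≤ 5 / (4 * μ) * frobNorm (H - H') * (‖P‖ * (1 / μ))
          + 1 / (2 * √μ) * ‖P‖ * (1 / (μ * √μ) * frobNorm (H - H')) := by
        grw [frobNorm_mul_le_mul_opNorm, frobNorm_mul_le_opNorm_mul, frobNorm_tikhonov_sub_le hμ,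
          frobNorm_gramResolvent_sub_le hμ, l2_opNorm_mul, l2_opNorm_mul,
          opNorm_gramResolvent_le hμ, opNorm_tikhonov_le hμ]
    _ = 7 * ‖P‖ / (4 * μ ^ 2) * frobNorm (H - H') := by
        field_simp
        rw [Real.sq_sqrt hμ.le]
        ring

lemma gramResolvent_transpose_mul_sub_eq_neg_smul [DecidableEq m] (hμ : 0 < μ)
    (P : Matrix n n ℝ) (H : Matrix m n ℝ) :
    gramResolvent μ Hᵀ * (H - H * P)
        - gramResolvent μ Hᵀ * (H * (1 - P) * Hᵀ + μ • 1) * gramResolvent μ Hᵀ * H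
      = -μ • (tikhonov μ H * P * gramResolvent μ H) := by
  set R := gramResolvent μ Hᵀ
  have hG : H * (1 - P) * Hᵀ + μ • 1 = (Hᵀᵀ * Hᵀ + μ • 1) - H * P * Hᵀ := by
    simp only [transpose_transpose, Matrix.mul_sub, Matrix.sub_mul, Matrix.mul_one]
    abel
  calc R * (H - H * P) - R * (H * (1 - P) * Hᵀ + μ • 1) * R * H
      = R * H - R * H * P - (R * H - R * H * P * (Hᵀ * (R * H))) := by
        rw [hG, Matrix.mul_sub R (_ + _), gramResolvent_mul_gram_add hμ]
        simp only [Matrix.mul_sub, Matrix.sub_mul, Matrix.one_mul, Matrix.mul_assoc]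
    _ = -μ • (tikhonov μ H * P * gramResolvent μ H) := by
        rw [gramResolvent_transpose_mul hμ, transpose_mul_tikhonov hμ, Matrix.mul_sub,
          Matrix.mul_one, Matrix.mul_smul, neg_smul]
        abel

end GramResolvent

section CentralPath

open scoped Matrix.Norms.L2Operator

/-- The projection `P = I_K ⊗ (1_n 1_nᵀ / n)`, which replaces each column by its class mean when
multiplied from the right. -/
def classAverage (K n : ℕ) : Matrix (Fin K × Fin n) (Fin K × Fin n) ℝ :=
  Matrix.of fun a b ↦ if a.1 = b.1 then 1 / (n : ℝ) else 0

lemma mul_classAverage (H : Matrix (Fin d) (Fin K × Fin n) ℝ) :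
    H * classAverage K n = HbarSpread H := by
  ext a b
  simp [Matrix.mul_apply, classAverage, HbarSpread, classMean, Fintype.sum_prod_type_right,
    Finset.mul_sum, mul_comm]

lemma isStarProjection_classAverage (hn : 0 < n) : IsStarProjection (classAverage K n) where
  isIdempotentElem := by
    have hn' : (n : ℝ) ≠ 0 := by positivity
    ext a b
    simp [Matrix.mul_apply, classAverage, Fintype.sum_prod_type]
    split_ifs <;> simp [hn']
  isSelfAdjoint := by
    ext a b
    simp [classAverage, eq_comm]

lemma SigmaW_eq_smul_mul_one_sub_classAverage_mul (hn : 0 < n)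
    (H : Matrix (Fin d) (Fin K × Fin n) ℝ) :
    SigmaW H = (1 / ((K : ℝ) * n)) • (H * (1 - classAverage K n) * Hᵀ) := by
  set Q := 1 - classAverage K n with hQ
  have hQproj : IsStarProjection Q := (isStarProjection_classAverage hn).one_sub
  have hres : H - HbarSpread H = H * Q := by
    rw [hQ, Matrix.mul_sub, mul_classAverage, Matrix.mul_one]
  have hQQ : Q * Qᵀ = Q := by
    rw [← conjTranspose_eq_transpose_of_trivial, ← star_eq_conjTranspose,
      hQproj.isSelfAdjoint.star_eq, hQproj.isIdempotentElem.eq]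
  calc SigmaW H = (1 / ((K : ℝ) * n)) • ((H - HbarSpread H) * (H - HbarSpread H)ᵀ) := by
        ext a b
        simp [SigmaW, HbarSpread, Matrix.mul_apply]
    _ = (1 / ((K : ℝ) * n)) • (H * (Q * Qᵀ) * Hᵀ) := by
        simp only [hres, transpose_mul, Matrix.mul_assoc]
    _ = _ := by rw [hQQ]

lemma inv_Amat (hK : 0 < K) (hn : 0 < n) {lW : ℝ} (hlW : 0 < lW)
    (H : Matrix (Fin d) (Fin K × Fin n) ℝ) :
    (Amat lW H)⁻¹ = ((K : ℝ) * n) • gramResolvent (n * lW) Hᵀ := by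
  have hA : Amat lW H = (1 / ((K : ℝ) * n)) • (Hᵀᵀ * Hᵀ + (n * lW) • 1) := by
    rw [Amat, SigmaTtil, smul_add, smul_smul, transpose_transpose]
    congr 2
    field_simp
  refine inv_eq_right_inv ?_
  rw [hA, smul_mul, Matrix.mul_smul, gram_add_mul_gramResolvent (by positivity), smul_smul,
    one_div_mul_cancel (by positivity), one_smul]

lemma gradL_eq (hK : 0 < K) (hn : 0 < n) {lW : ℝ} (hlW : 0 < lW) (lH : ℝ)
    (H : Matrix (Fin d) (Fin K × Fin n) ℝ) :
    gradL lW lH H = (lH / (K * n)) • H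
      - (n * lW / K) • (tikhonov (n * lW) H * classAverage K n * gramResolvent (n * lW) H) := by
  have hS : SigmaW H + (lW / K) • 1
      = (1 / ((K : ℝ) * n)) • (H * (1 - classAverage K n) * Hᵀ + (n * lW) • 1) := by
    rw [SigmaW_eq_smul_mul_one_sub_classAverage_mul hn, smul_add, smul_smul]
    congr 2
    field_simp
  have hmain := gramResolvent_transpose_mul_sub_eq_neg_smul (μ := n * lW) (by positivity)
    (classAverage K n) H
  rw [gradL, inv_Amat hK hn hlW, hS, ← mul_classAverage]
  generalize H * (1 - classAverage K n) * Hᵀ + (n * lW) • 1 = T at hmain ⊢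
  calc _ = (1 / (K : ℝ)) • (gramResolvent (n * lW) Hᵀ * (H - H * classAverage K n)
          - gramResolvent (n * lW) Hᵀ * T * gramResolvent (n * lW) Hᵀ * H)
          + (lH / (K * n)) • H := by
        simp only [smul_mul, Matrix.mul_smul]
        match_scalars <;> field_simp
    _ = _ := by
        rw [hmain]
        module

theorem gradL_lipschitz_general (hK : 0 < K) (hn : 0 < n) {lW : ℝ} (hlW : 0 < lW) (lH : ℝ)
    (H H' : Matrix (Fin d) (Fin K × Fin n) ℝ) :
    frobNorm (gradL lW lH H - gradL lW lH H')
      ≤ (1 / ((K : ℝ) * n)) * (7 / (4 * lW) + |lH|) * frobNorm (H - H') := by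
  set μ : ℝ := n * lW with hμ_def
  have hμ : 0 < μ := by positivity
  set P := classAverage K n
  have hP : ‖P‖ ≤ 1 := (isStarProjection_classAverage hn).norm_le
  set F : Matrix (Fin d) (Fin K × Fin n) ℝ → Matrix (Fin d) (Fin K × Fin n) ℝ :=
    fun H ↦ tikhonov μ H * P * gramResolvent μ H
  have hF : frobNorm (F H - F H') ≤ 7 / (4 * μ ^ 2) * frobNorm (H - H') := by
    grw [frobNorm_tikhonov_mul_gramResolvent_sub_le hμ, hP, mul_one]
    exact frobNorm_nonneg _
  have hgrad : gradL lW lH H - gradL lW lH H'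
      = (lH / (K * n)) • (H - H') - (μ / K) • (F H - F H') := by
    rw [gradL_eq hK hn hlW, gradL_eq hK hn hlW]
    module
  calc _ ≤ |lH| / (K * n) * frobNorm (H - H') + μ / K * frobNorm (F H - F H') := by
        grw [hgrad, frobNorm_sub_le, frobNorm_smul, frobNorm_smul, abs_div,
          abs_of_pos (by positivity : (0 : ℝ) < K * n), abs_of_pos (by positivity : 0 < μ / K)]
    _ ≤ |lH| / (K * n) * frobNorm (H - H')
          + μ / K * (7 / (4 * μ ^ 2) * frobNorm (H - H')) := by gcongr
    _ = _ := by
        rw [hμ_def]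
        field_simp
        ring

end CentralPath

/-- the gradient of the central-path loss is globally Lipschitz:
`‖∇L(H) − ∇L(H')‖_F ≤ (1/(Kn))(10/λ_W + λ_H)‖H − H'‖_F`. -/
theorem gradL_lipschitz
    (K n d : ℕ) (hK : 0 < K) (hn : 0 < n) (hdK : K ≤ d)
    (lW lH : ℝ) (hlW : 0 < lW) (hlH : 0 ≤ lH)
    (H H' : Matrix (Fin d) (Fin K × Fin n) ℝ) :
    frobNorm (gradL lW lH H - gradL lW lH H')
      ≤ (1 / ((K : ℝ) * n)) * (10 / lW + lH) * frobNorm (H - H') := by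
  grw [gradL_lipschitz_general hK hn hlW lH H H', abs_of_nonneg hlH,
    show 7 / (4 * lW) ≤ 10 / lW by gcongr <;> linarith]
  exact frobNorm_nonneg _

end
end
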